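/- arXiv:2206.07356 — 2 statements merged into one kernel-verified Lean document; each statement's English description precedes it below -/
import Mathlib

section
/- Let f : ℝ^n → ℝ be α-strongly convex (α > 0) with Fenchel conjugate f*(u) = sup_{z ∈ ℝ^n} (⟨u, z⟩ − f(z)). Let a ∈ ℝ^n with a ≠ 0, b ∈ ℝ, and H(a,b) = {x ∈ ℝ^n : ⟨a, x⟩ = b}. Let x ∈ ℝ^n, x* ∈ ∂f(x), let t̂ ∈ ℝ be a minimizer of t ↦ f*(x* − t·a) + t·b over ℝ, and let z ∈ ℝ^n be such that z* := x* − t̂·a ∈ ∂f(z). Then z ∈ H(a,b), and for every y ∈ H(a,b) one has D_f^{z*}(z, y) ≤ D_f^{x*}(x, y) − (α/2)·(⟨a, x⟩ − b)²/‖a‖². -/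
/-- Euclidean inner product on finite-dimensional real coordinate space. -/
noncomputable def ip {I : Type*} [Fintype I] (u v : I → ℝ) : ℝ := ∑ i, u i * v i

/-- Euclidean norm. -/
noncomputable def enorm2 {I : Type*} [Fintype I] (v : I → ℝ) : ℝ :=
  Real.sqrt (∑ i, (v i) ^ 2)

/-- ℓ₁ norm. -/
noncomputable def norm1 {I : Type*} [Fintype I] (v : I → ℝ) : ℝ := ∑ i, |v i|

/-- ℓ∞ norm. -/
noncomputable def normInf {I : Type*} [Fintype I] (v : I → ℝ) : ℝ := ⨆ i, |v i|

/-- Subdifferential of a convex function. -/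
def subdiff {I : Type*} [Fintype I] (f : (I → ℝ) → ℝ) (x : I → ℝ) : Set (I → ℝ) :=
  {g | ∀ y, f y ≥ f x + ip g (y - x)}

/-- Bregman distance `D_f^{g}(x, y)` with respect to `f` and subgradient `g ∈ ∂f(x)`. -/
noncomputable def breg {I : Type*} [Fintype I] (f : (I → ℝ) → ℝ) (g x y : I → ℝ) : ℝ :=
  f y - f x - ip g (y - x)

/-- Fenchel conjugate. -/
noncomputable def fconj {I : Type*} [Fintype I] (f : (I → ℝ) → ℝ) (u : I → ℝ) : ℝ :=
  ⨆ z, (ip u z - f z)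

/-- Soft shrinkage (soft thresholding) operator. -/
noncomputable def softShrink {I : Type*} [Fintype I] (lam : ℝ) (x : I → ℝ) : I → ℝ :=
  fun i => Real.sign (x i) * max (|x i| - lam) 0

/-- Smallest singular value `σ_min(M) = inf_{x ≠ 0} ‖Mx‖/‖x‖`. -/
noncomputable def sigmaMin {I J : Type*} [Fintype I] [Fintype J] (M : Matrix I J ℝ) : ℝ :=
  sInf {r | ∃ x : J → ℝ, x ≠ 0 ∧ r = enorm2 (M.mulVec x) / enorm2 x}

/-- Largest singular value `σ_max(M) = sup_{x ≠ 0} ‖Mx‖/‖x‖`. -/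
noncomputable def sigmaMax {I J : Type*} [Fintype I] [Fintype J] (M : Matrix I J ℝ) : ℝ :=
  sSup {r | ∃ x : J → ℝ, x ≠ 0 ∧ r = enorm2 (M.mulVec x) / enorm2 x}

/-- Frobenius norm. -/
noncomputable def frobNorm {I J : Type*} [Fintype I] [Fintype J] (M : Matrix I J ℝ) : ℝ :=
  Real.sqrt (∑ i, ∑ j, (M i j) ^ 2)

/-- `‖A‖_{1,2} = sqrt (∑ i ‖a_i‖₁²)` where `a_iᵀ` are the rows of `A`. -/
noncomputable def norm12 {m n : ℕ} (A : Matrix (Fin m) (Fin n) ℝ) : ℝ :=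
  Real.sqrt (∑ i, (norm1 (A i)) ^ 2)

/-- Column submatrix `A_J`. -/
noncomputable def colSub {m n : ℕ} (A : Matrix (Fin m) (Fin n) ℝ) (J : Finset (Fin n)) :
    Matrix (Fin m) {j // j ∈ J} ℝ := A.submatrix id Subtype.val

/-- Row submatrix `A_I`. -/
noncomputable def rowSub {m n : ℕ} (A : Matrix (Fin m) (Fin n) ℝ) (I : Finset (Fin m)) :
    Matrix {i // i ∈ I} (Fin n) ℝ := A.submatrix Subtype.val id

/-- Submatrix `A_{I,J}` with rows in `I` and columns in `J`. -/
noncomputable def subMat {m n : ℕ} (A : Matrix (Fin m) (Fin n) ℝ)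
    (I : Finset (Fin m)) (J : Finset (Fin n)) :
    Matrix {i // i ∈ I} {j // j ∈ J} ℝ := A.submatrix Subtype.val Subtype.val

/-- `σ̃_min(A) = min{σ_min(A_J) : J ⊆ {1,…,n}, A_J ≠ 0}`. -/
noncomputable def sigmaTildeMin {m n : ℕ} (A : Matrix (Fin m) (Fin n) ℝ) : ℝ :=
  sInf {r | ∃ J : Finset (Fin n), colSub A J ≠ 0 ∧ r = sigmaMin (colSub A J)}

/-- `σ̃_{q−β,min}(A)` (with `k = (q−β)m`): min of `σ_min(A_{I,J})` over `|I| = k` and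
`J` nonempty. -/
noncomputable def sigmaTildeQBMin {m n : ℕ} (A : Matrix (Fin m) (Fin n) ℝ) (k : ℕ) : ℝ :=
  sInf {r | ∃ (I : Finset (Fin m)) (J : Finset (Fin n)),
    I.card = k ∧ J.Nonempty ∧ r = sigmaMin (subMat A I J)}

/-- Variant of `σ̃_{q−β,min}(A)` requiring moreover `A_J ≠ 0`. -/
noncomputable def sigmaTildeQBMin' {m n : ℕ} (A : Matrix (Fin m) (Fin n) ℝ) (k : ℕ) : ℝ :=
  sInf {r | ∃ (I : Finset (Fin m)) (J : Finset (Fin n)),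
    I.card = k ∧ J.Nonempty ∧ colSub A J ≠ 0 ∧ r = sigmaMin (subMat A I J)}

/-- `σ_{q−β,min}(A)` (with `k = (q−β)m`): min of `σ_min(A_I)` over `|I| = k`. -/
noncomputable def sigmaQBMin {m n : ℕ} (A : Matrix (Fin m) (Fin n) ℝ) (k : ℕ) : ℝ :=
  sInf {r | ∃ I : Finset (Fin m), I.card = k ∧ r = sigmaMin (rowSub A I)}

/-- The increasingly sorted rearrangement `y_(1) ≤ … ≤ y_(m)` of a finite tuple. -/
noncomputable def sortedVal {m : ℕ} (y : Fin m → ℝ) : Fin m → ℝ := y ∘ Tuple.sort y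

/-- The `q`-quantile of `y_1, …, y_m` in the case where `qm = k` is an integer:
`(y_(k) + y_(k+1))/2` (1-indexed). -/
noncomputable def quantileAt {m : ℕ} (k : ℕ) (y : Fin m → ℝ) : ℝ :=
  if h : 0 < k ∧ k < m then
    (sortedVal y ⟨k - 1, by omega⟩ + sortedVal y ⟨k, h.2⟩) / 2
  else 0

/-- `|x̂|_min = min{|x̂_j| : x̂_j ≠ 0}`. -/
noncomputable def xminOf {n : ℕ} (xhat : Fin n → ℝ) : ℝ :=
  sInf {r | ∃ j, xhat j ≠ 0 ∧ r = |xhat j|}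

/-!
A subgradient `z*` of `f` at `z` at which `f` grows quadratically squeezes the conjugate between
the affine function `u ↦ ⟨u, z⟩ - f z` and the same function plus `‖u - z*‖² / (2α)`, so `f*` is
differentiable at `z*` with gradient `z`. Fermat's rule for `t ↦ f*(x* - t a) + t b` at `t̂` then
reads `⟨a, z⟩ = b`. Since `x* - z*` is a multiple of `a`, the three-point identity becomes the
Pythagorean equality `D(z, y) = D(x, y) - D(x, z)` on the hyperplane, and `D(x, z)` is at least
`α / 2` times the squared distance from `x` to the hyperplane.
-/

open Asymptotics Topology

section EuclideanGeometry

variable {I : Type*} [Fintype I]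

theorem ip_eq_dotProduct (u v : I → ℝ) : ip u v = u ⬝ᵥ v := rfl

theorem enorm2_sq (v : I → ℝ) : enorm2 v ^ 2 = ∑ i, v i ^ 2 :=
  Real.sq_sqrt (Finset.sum_nonneg fun _ _ => sq_nonneg _)

theorem enorm2_pos {v : I → ℝ} (hv : v ≠ 0) : 0 < enorm2 v := by
  obtain ⟨i, hi⟩ := Function.ne_iff.mp hv
  exact Real.sqrt_pos.mpr <| Finset.sum_pos' (fun _ _ => sq_nonneg _)
    ⟨i, Finset.mem_univ i, sq_pos_of_ne_zero hi⟩

theorem enorm2_sq_le_card_mul_norm_sq (v : I → ℝ) :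
    enorm2 v ^ 2 ≤ Fintype.card I * ‖v‖ ^ 2 := by
  rw [enorm2_sq, ← nsmul_eq_mul]
  refine Finset.sum_le_card_nsmul _ _ _ fun i _ => ?_
  exact sq_le_sq.mpr ((norm_le_pi_norm v i).trans (le_abs_self _))

theorem ip_le_enorm2_mul_enorm2 (u v : I → ℝ) : ip u v ≤ enorm2 u * enorm2 v :=
  Real.sum_mul_le_sqrt_mul_sqrt _ _ _

theorem ip_sq_le_enorm2_sq_mul_enorm2_sq (u v : I → ℝ) :
    ip u v ^ 2 ≤ enorm2 u ^ 2 * enorm2 v ^ 2 := by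
  simpa only [ip, enorm2_sq] using Finset.sum_mul_sq_le_sq_mul_sq Finset.univ u v

theorem ip_le_young {α : ℝ} (hα : 0 < α) (u v : I → ℝ) :
    ip u v ≤ enorm2 u ^ 2 / (2 * α) + α / 2 * enorm2 v ^ 2 := by
  have hsq : enorm2 u ^ 2 / (2 * α) + α / 2 * enorm2 v ^ 2 - enorm2 u * enorm2 v =
      (enorm2 u - α * enorm2 v) ^ 2 / (2 * α) := by
    field_simp
    ring
  have hsq_nonneg : 0 ≤ (enorm2 u - α * enorm2 v) ^ 2 / (2 * α) := by positivity
  linarith [ip_le_enorm2_mul_enorm2 u v]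

theorem sq_ip_sub_div_enorm2_sq_le {a z : I → ℝ} (ha : a ≠ 0) {b : ℝ} (hz : ip a z = b)
    (x : I → ℝ) : (ip a x - b) ^ 2 / enorm2 a ^ 2 ≤ enorm2 (z - x) ^ 2 := by
  have hip : ip a (z - x) = -(ip a x - b) := by
    rw [← hz]
    simp only [ip_eq_dotProduct, dotProduct_sub, neg_sub]
  rw [div_le_iff₀' (pow_pos (enorm2_pos ha) 2), ← neg_sq, ← hip]
  exact ip_sq_le_enorm2_sq_mul_enorm2_sq a (z - x)

end EuclideanGeometry

section Bregman

variable {I : Type*} [Fintype I] (f : (I → ℝ) → ℝ)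

theorem breg_three_point (g h x y z : I → ℝ) :
    breg f h z y = breg f g x y - breg f g x z + ip (g - h) (y - z) := by
  simp only [breg, ip_eq_dotProduct, dotProduct_sub, sub_dotProduct]
  ring

theorem breg_sub_smul_of_ip_eq {a y z : I → ℝ} (h : ip a y = ip a z) (g x : I → ℝ) (t : ℝ) :
    breg f (g - t • a) z y = breg f g x y - breg f g x z := by
  have horth : ip (g - (g - t • a)) (y - z) = 0 := by
    rw [ip_eq_dotProduct, ip_eq_dotProduct] at h
    rw [sub_sub_cancel, ip_eq_dotProduct, smul_dotProduct, dotProduct_sub, h, sub_self, smul_zero]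
  rw [breg_three_point f g _ x, horth, add_zero]

end Bregman

/-- `g` is a subgradient of `f` at `x` whose affine minorant is exceeded by `α / 2 * ‖y - x‖²`.
Strong convexity says that every subgradient is of this kind; here the condition is imposed on a
single pair `(g, x)`. -/
def IsStrongSubgradient {I : Type*} [Fintype I] (α : ℝ) (f : (I → ℝ) → ℝ) (g x : I → ℝ) : Prop :=
  ∀ y, f y ≥ f x + ip g (y - x) + α / 2 * enorm2 (y - x) ^ 2

namespace IsStrongSubgradient

variable {I : Type*} [Fintype I] {α : ℝ} {f : (I → ℝ) → ℝ} {g x : I → ℝ}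

theorem le_breg (h : IsStrongSubgradient α f g x) (y : I → ℝ) :
    α / 2 * enorm2 (y - x) ^ 2 ≤ breg f g x y := by
  unfold breg
  linarith [h y]

theorem ip_sub_le_ip_sub_add (hα : 0 < α) (h : IsStrongSubgradient α f g x) (u y : I → ℝ) :
    ip u y - f y ≤ ip u x - f x + enorm2 (u - g) ^ 2 / (2 * α) := by
  have hyoung := ip_le_young hα (u - g) (y - x)
  have hgrowth := h y
  simp only [ip_eq_dotProduct, dotProduct_sub, sub_dotProduct] at hyoung hgrowth ⊢
  linarith

theorem fconj_le (hα : 0 < α) (h : IsStrongSubgradient α f g x) (u : I → ℝ) :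
    fconj f u ≤ ip u x - f x + enorm2 (u - g) ^ 2 / (2 * α) :=
  ciSup_le (h.ip_sub_le_ip_sub_add hα u)

-- `fconj` is the junk value `0` where the supremum is infinite; quadratic growth at one point
-- rules this out.
theorem le_fconj (hα : 0 < α) (h : IsStrongSubgradient α f g x) (u y : I → ℝ) :
    ip u y - f y ≤ fconj f u :=
  have hbdd : BddAbove (Set.range fun y => ip u y - f y) :=
    ⟨_, Set.forall_mem_range.mpr (h.ip_sub_le_ip_sub_add hα u)⟩
  le_ciSup hbdd y

theorem hasFDerivAt_fconj (hα : 0 < α) (h : IsStrongSubgradient α f g x) :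
    HasFDerivAt (fconj f) (dotProductBilin ℝ ℝ x).toContinuousLinearMap g := by
  set L := (dotProductBilin ℝ ℝ x).toContinuousLinearMap
  have hL (u : I → ℝ) : L u = ip u x := dotProduct_comm x u
  have hquad : (fun u => fconj f u - (L u - f x)) =O[𝓝 g] fun u => ‖u - g‖ ^ 2 := by
    refine .of_bound (Fintype.card I / (2 * α)) (.of_forall fun u => ?_)
    have hlower := h.le_fconj hα u x
    have hupper := h.fconj_le hα u
    have hnorm : enorm2 (u - g) ^ 2 / (2 * α) ≤ Fintype.card I / (2 * α) * ‖u - g‖ ^ 2 := by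
      rw [div_mul_eq_mul_div]
      gcongr
      exact enorm2_sq_le_card_mul_norm_sq _
    rw [hL, Real.norm_of_nonneg (by linarith), Real.norm_of_nonneg (by positivity)]
    linarith
  simpa only [sub_add_cancel, zero_add] using
    (hquad.hasFDerivAt one_lt_two).fun_add (L.hasFDerivAt.sub_const (f x))

theorem ip_eq_of_forall_fconj_le {a z : I → ℝ} {b s : ℝ} (hα : 0 < α)
    (hz : IsStrongSubgradient α f (g - s • a) z)
    (hs : ∀ t, fconj f (g - s • a) + s * b ≤ fconj f (g - t • a) + t * b) : ip a z = b := by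
  have hgrad := hz.hasFDerivAt_fconj hα
  have hline : HasDerivAt (fun t : ℝ => g - t • a) (-a) s := by
    simpa using ((hasDerivAt_id s).smul_const a).const_sub g
  have hconj : HasDerivAt (fun t : ℝ => fconj f (g - t • a)) (z ⬝ᵥ -a) s :=
    (hgrad.comp_hasDerivAt s hline :)
  have hfermat : z ⬝ᵥ -a + b = 0 :=
    IsLocalMin.hasDerivAt_eq_zero (.of_forall hs) (hconj.fun_add (hasDerivAt_mul_const b))
  rw [dotProduct_neg, dotProduct_comm] at hfermat
  rw [ip_eq_dotProduct]
  linarith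

end IsStrongSubgradient

theorem stmt1_general {I : Type*} [Fintype I] {f : (I → ℝ) → ℝ} {α : ℝ} (hα : 0 < α)
    {a : I → ℝ} (ha : a ≠ 0) {b : ℝ} {x xs : I → ℝ} (hxs : IsStrongSubgradient α f xs x)
    {that : ℝ}
    (hthat : ∀ t : ℝ, fconj f (xs - that • a) + that * b ≤ fconj f (xs - t • a) + t * b)
    {z : I → ℝ} (hz : IsStrongSubgradient α f (xs - that • a) z) :
    ip a z = b ∧
    ∀ y : I → ℝ, ip a y = b →
      breg f (xs - that • a) z y ≤
        breg f xs x y - α / 2 * (ip a x - b) ^ 2 / enorm2 a ^ 2 := by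
  have hzb : ip a z = b := hz.ip_eq_of_forall_fconj_le hα hthat
  refine ⟨hzb, fun y hyb => ?_⟩
  rw [breg_sub_smul_of_ip_eq f (hyb.trans hzb.symm) xs x that, mul_div_assoc]
  gcongr
  calc α / 2 * ((ip a x - b) ^ 2 / enorm2 a ^ 2)
      ≤ α / 2 * enorm2 (z - x) ^ 2 := by
        gcongr
        exact sq_ip_sub_div_enorm2_sq_le ha hzb x
    _ ≤ breg f xs x z := hxs.le_breg z

/-- Lemma 2.4: the Bregman projection onto a hyperplane `H(a,b)`
obtained from a minimizer `t̂` of `t ↦ f*(x* − t a) + t b` lies in `H(a,b)`, and for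
every `y ∈ H(a,b)` one has
`D_f^{z*}(z,y) ≤ D_f^{x*}(x,y) − (α/2) (⟨a,x⟩ − b)²/‖a‖²`. -/
theorem stmt1 {n : ℕ} (f : (Fin n → ℝ) → ℝ) (hconv : ConvexOn ℝ Set.univ f)
    (α : ℝ) (hα : 0 < α)
    (hstrong : ∀ x y g, g ∈ subdiff f x →
      f y ≥ f x + ip g (y - x) + α / 2 * enorm2 (y - x) ^ 2)
    (a : Fin n → ℝ) (ha : a ≠ 0) (b : ℝ)
    (x xs : Fin n → ℝ) (hxs : xs ∈ subdiff f x)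
    (that : ℝ)
    (hthat : ∀ t : ℝ, fconj f (xs - that • a) + that * b ≤ fconj f (xs - t • a) + t * b)
    (z : Fin n → ℝ) (hz : xs - that • a ∈ subdiff f z) :
    ip a z = b ∧
    ∀ y : Fin n → ℝ, ip a y = b →
      breg f (xs - that • a) z y ≤
        breg f xs x y - α / 2 * (ip a x - b) ^ 2 / enorm2 a ^ 2 :=
  stmt1_general hα ha (fun y => hstrong x y xs hxs) hthat (fun y => hstrong z y _ hz)
end

section
/- Quantile bound (Lemma 3.1): let A ∈ ℝ^{m×n} have rows a_1ᵀ, …, a_mᵀ with ‖a_i‖ = 1 for all i. Let x̂ ∈ ℝ^n and b = A x̂ + b^c + r, where b^c ∈ ℝ^m has exactly βm nonzero entries and r ∈ ℝ^m. Assume β < q < 1 − β with qm and βm integers. For x ∈ ℝ^n let Q be the q-quantile of the residuals (|⟨a_i, x⟩ − b_i|)_{i=1}^m. Then Q ≤ (√(1 − β)/((1 − β − q)√m))·σ_max(A)·‖x − x̂‖ + ((1 − β)/(1 − β − q))·‖r‖_∞. -/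
/-!
With `k = qm`, at least `m - k` of the residuals `y_i` satisfy `y_i ≥ y_(k+1)`, hence at least
`m - k - |C|` of them do so outside the set `C` of corrupted equations, where
`y_i ≤ |(A (x - x̂))_i| + ‖r‖_∞`. By averaging squares, one of these rows has
`|(A (x - x̂))_i| ≤ ‖A (x - x̂)‖ / √(m - k - |C|)`. Since `Q ≤ y_(k+1)`, this gives
`Q ≤ σ_max(A) ‖x - x̂‖ / √((1 - β - q) m) + ‖r‖_∞`, stronger than the stated one because
`1 - β - q ≤ 1 - β`.
-/

section Norms

variable {I J : Type*} [Fintype I] [Fintype J]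

lemma enorm2_eq_norm_toLp (v : I → ℝ) : enorm2 v = ‖WithLp.toLp 2 v‖ := by
  simp [enorm2, EuclideanSpace.norm_eq]

lemma enorm2_nonneg (v : I → ℝ) : 0 ≤ enorm2 v := Real.sqrt_nonneg _

lemma abs_le_normInf (v : I → ℝ) (i : I) : |v i| ≤ normInf v :=
  le_ciSup (f := fun i => |v i|) (Set.finite_range _).bddAbove i

lemma normInf_nonneg (v : I → ℝ) : 0 ≤ normInf v := Real.iSup_nonneg fun _ => abs_nonneg _

lemma sigmaMax_nonneg (A : Matrix I J ℝ) : 0 ≤ sigmaMax A := by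
  refine Real.sSup_nonneg ?_
  rintro _ ⟨x, -, rfl⟩
  exact div_nonneg (enorm2_nonneg _) (enorm2_nonneg _)

open scoped Matrix.Norms.L2Operator in
lemma bddAbove_enorm2_mulVec_div (A : Matrix I J ℝ) :
    BddAbove {c | ∃ x : J → ℝ, x ≠ 0 ∧ c = enorm2 (A.mulVec x) / enorm2 x} := by
  classical
  refine ⟨‖A‖, ?_⟩
  rintro _ ⟨x, -, rfl⟩
  refine div_le_of_le_mul₀ (enorm2_nonneg x) (norm_nonneg A) ?_
  rw [enorm2_eq_norm_toLp, enorm2_eq_norm_toLp]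
  exact A.l2_opNorm_mulVec (WithLp.toLp 2 x)

lemma enorm2_mulVec_le (A : Matrix I J ℝ) (x : J → ℝ) :
    enorm2 (A.mulVec x) ≤ sigmaMax A * enorm2 x := by
  obtain rfl | hx := eq_or_ne x 0
  · simp [enorm2]
  have hpos : 0 < enorm2 x := by
    rw [enorm2_eq_norm_toLp, norm_pos_iff]
    simpa using hx
  rw [← div_le_iff₀ hpos]
  exact le_csSup (bddAbove_enorm2_mulVec_div A) ⟨x, hx, rfl⟩

lemma exists_mem_abs_le_enorm2_div_sqrt_card {s : Finset I} (hs : s.Nonempty) (v : I → ℝ) :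
    ∃ i ∈ s, |v i| ≤ enorm2 v / √s.card := by
  have hcard : (0 : ℝ) < s.card := by exact_mod_cast hs.card_pos
  have hsum : ∑ i ∈ s, v i ^ 2 ≤ ∑ _i ∈ s, (∑ j, v j ^ 2) / s.card := by
    rw [Finset.sum_const, nsmul_eq_mul, mul_div_cancel₀ _ hcard.ne']
    exact Finset.sum_le_univ_sum_of_nonneg fun i => sq_nonneg (v i)
  obtain ⟨i, hi, hle⟩ := Finset.exists_le_of_sum_le hs hsum
  refine ⟨i, hi, ?_⟩
  rw [enorm2, ← Real.sqrt_div' _ hcard.le]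
  exact Real.abs_le_sqrt hle

end Norms

section OrderStatistics

variable {m : ℕ}

lemma monotone_sortedVal (y : Fin m → ℝ) : Monotone (sortedVal y) := Tuple.monotone_sort y

lemma sub_le_card_filter_sortedVal_le (y : Fin m → ℝ) (k : Fin m) :
    m - k ≤ (Finset.univ.filter fun i => sortedVal y k ≤ y i).card := by
  rw [← Fin.card_Ici]
  refine Finset.card_le_card_of_injOn (Tuple.sort y) (fun j hj => ?_)
    (Tuple.sort y).injective.injOn
  exact Finset.mem_filter.mpr ⟨Finset.mem_univ _, monotone_sortedVal y (Finset.mem_Ici.mp hj)⟩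

lemma quantileAt_le_sortedVal (y : Fin m → ℝ) {k : ℕ} (hk : 0 < k) (hkm : k < m) :
    quantileAt k y ≤ sortedVal y ⟨k, hkm⟩ := by
  have hle : sortedVal y ⟨k - 1, by omega⟩ ≤ sortedVal y ⟨k, hkm⟩ :=
    monotone_sortedVal y (Fin.mk_le_mk.mpr (Nat.sub_le k 1))
  rw [quantileAt, dif_pos ⟨hk, hkm⟩]
  linarith

lemma sortedVal_le_of_forall_notMem_le {y v : Fin m → ℝ} {ρ : ℝ} {C : Finset (Fin m)}
    (hy : ∀ i ∉ C, y i ≤ |v i| + ρ) {k : Fin m} (hk : k + C.card < m) :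
    sortedVal y k ≤ enorm2 v / √(m - k - C.card) + ρ := by
  have hsorted := sub_le_card_filter_sortedVal_le y k
  set U := Finset.univ.filter fun i => sortedVal y k ≤ y i with hU
  set T := U \ C with hT
  have hcard : m ≤ T.card + k + C.card := by
    have hsdiff : U.card - C.card ≤ T.card := Finset.le_card_sdiff C U
    omega
  have hT_nonempty : T.Nonempty := Finset.card_pos.mp (by omega)
  obtain ⟨i, hi, hvi⟩ := exists_mem_abs_le_enorm2_div_sqrt_card hT_nonempty v
  obtain ⟨hyi, hiC⟩ : sortedVal y k ≤ y i ∧ i ∉ C := by simpa [hT, hU] using hi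
  have hpos : (0 : ℝ) < m - k - C.card := by
    have : (k + C.card : ℝ) < m := by exact_mod_cast hk
    linarith
  have hcard' : (m - k - C.card : ℝ) ≤ T.card := by
    have : (m : ℝ) ≤ T.card + k + C.card := by exact_mod_cast hcard
    linarith
  calc sortedVal y k ≤ |v i| + ρ := hyi.trans (hy i hiC)
    _ ≤ enorm2 v / √T.card + ρ := by gcongr
    _ ≤ enorm2 v / √(m - k - C.card) + ρ := by
      gcongr
      exact enorm2_nonneg v

end OrderStatistics

lemma abs_ip_sub_le_of_eq_zero {I J : Type*} [Fintype I] [Fintype J] (A : Matrix I J ℝ)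
    (x xhat : J → ℝ) {bc : I → ℝ} (r : I → ℝ) {i : I} (hi : bc i = 0) :
    |ip (A i) x - (A.mulVec xhat + bc + r) i| ≤ |A.mulVec (x - xhat) i| + normInf r := by
  have hres : ip (A i) x - (A.mulVec xhat + bc + r) i = A.mulVec (x - xhat) i - r i := by
    rw [show ip (A i) x = A.mulVec x i from rfl, Matrix.mulVec_sub]
    simp only [Pi.add_apply, Pi.sub_apply, hi]
    ring
  rw [hres]
  exact (abs_sub _ _).trans (by gcongr; exact abs_le_normInf r i)

lemma div_sqrt_mul_add_le {a c s t ρ : ℝ} (ha : 0 < a) (hac : a ≤ c) (hs : 0 ≤ s) (hρ : 0 ≤ ρ) :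
    s / √(a * t) + ρ ≤ √c / (a * √t) * s + c / a * ρ := by
  have hsqrt : s / √(a * t) ≤ √c / (a * √t) * s :=
    calc s / √(a * t) = √a / (a * √t) * s := by
          rw [Real.sqrt_mul ha.le, ← div_div √a, Real.sqrt_div_self']
          ring
      _ ≤ √c / (a * √t) * s := by gcongr
  have hone : ρ ≤ c / a * ρ := le_mul_of_one_le_left hρ ((one_le_div ha).mpr hac)
  exact add_le_add hsqrt hone

theorem stmt8_general {m : ℕ} {J : Type*} [Fintype J] (A : Matrix (Fin m) J ℝ)
    (xhat : J → ℝ) (bc r : Fin m → ℝ) (q β : ℝ) (hq : q < 1 - β)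
    (kq : ℕ) (hkq_pos : 0 < kq) (hkq : (kq : ℝ) = q * m)
    (hbc : ((Finset.univ.filter fun i => bc i ≠ 0).card : ℝ) ≤ β * m)
    (b : Fin m → ℝ) (hb : b = A.mulVec xhat + bc + r) (x : J → ℝ) :
    quantileAt kq (fun i => |ip (A i) x - b i|) ≤
      sigmaMax A * enorm2 (x - xhat) / √((1 - β - q) * m) + normInf r := by
  subst hb
  set C := Finset.univ.filter fun i => bc i ≠ 0 with hC
  have hm : (0 : ℝ) < m := by
    refine m.cast_nonneg.lt_of_ne' fun hm => ?_
    simp [hm, hkq_pos.ne'] at hkq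
  have hgap : (1 - β - q) * m ≤ m - kq - C.card := by linarith
  have hgap_pos : 0 < (1 - β - q) * m := mul_pos (by linarith) hm
  have hkC : kq + C.card < m := by
    have : (kq + C.card : ℝ) < m := by linarith
    exact_mod_cast this
  have hres : ∀ i ∉ C, |ip (A i) x - (A.mulVec xhat + bc + r) i| ≤
      |A.mulVec (x - xhat) i| + normInf r := fun i hi =>
    abs_ip_sub_le_of_eq_zero A x xhat r (by simpa [hC] using hi)
  calc quantileAt kq (fun i => |ip (A i) x - (A.mulVec xhat + bc + r) i|)
      ≤ sortedVal (fun i => |ip (A i) x - (A.mulVec xhat + bc + r) i|) ⟨kq, by omega⟩ :=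
        quantileAt_le_sortedVal _ hkq_pos _
    _ ≤ enorm2 (A.mulVec (x - xhat)) / √(m - kq - C.card) + normInf r :=
        sortedVal_le_of_forall_notMem_le hres hkC
    _ ≤ sigmaMax A * enorm2 (x - xhat) / √((1 - β - q) * m) + normInf r := by
        gcongr
        · exact (enorm2_nonneg _).trans (enorm2_mulVec_le A _)
        · exact enorm2_mulVec_le A _

/-- Lemma 3.1, quantile bound: the `q`-quantile `Q` of the residuals
satisfies `Q ≤ (√(1−β)/((1−β−q)√m)) σ_max(A) ‖x − x̂‖ + ((1−β)/(1−β−q)) ‖r‖_∞`. -/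
theorem stmt8 {m n : ℕ} (A : Matrix (Fin m) (Fin n) ℝ)
    (hrows : ∀ i, enorm2 (A i) = 1)
    (xhat : Fin n → ℝ) (bc r : Fin m → ℝ)
    (q β : ℝ) (hβq : β < q) (hq : q < 1 - β)
    (kq kb : ℕ) (hkq : (kq : ℝ) = q * m) (hkb : (kb : ℝ) = β * m)
    (hbc : (Finset.univ.filter (fun i => bc i ≠ 0)).card = kb)
    (b : Fin m → ℝ) (hb : b = A.mulVec xhat + bc + r)
    (x : Fin n → ℝ)
    (Q : ℝ) (hQ : Q = quantileAt kq (fun i => |ip (A i) x - b i|)) :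
    Q ≤ (Real.sqrt (1 - β) / ((1 - β - q) * Real.sqrt m)) * sigmaMax A *
          enorm2 (x - xhat) +
        ((1 - β) / (1 - β - q)) * normInf r := by
  obtain rfl | hm_pos := m.eq_zero_or_pos
  · simp [hQ, quantileAt, normInf]
  have hm : (0 : ℝ) < m := Nat.cast_pos.mpr hm_pos
  have hβ : 0 ≤ β := nonneg_of_mul_nonneg_left (hkb ▸ kb.cast_nonneg) hm
  have hkq_pos : 0 < kq := by exact_mod_cast hkq ▸ mul_pos (hβ.trans_lt hβq) hm
  rw [hQ, mul_assoc]
  exact (stmt8_general A xhat bc r q β hq kq hkq_pos hkq (hbc ▸ hkb).le b hb x).trans <|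
    div_sqrt_mul_add_le (by linarith) (by linarith)
      (mul_nonneg (sigmaMax_nonneg A) (enorm2_nonneg _)) (normInf_nonneg r)
end
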